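/- arXiv:1006.2781 — 3 statements merged into one kernel-verified Lean document; each statement's English description precedes it below -/
import Mathlib

section
/- Let R be a commutative ring, C a commutative associative unital R-algebra, and Δ : C → C ⊗[R] C an R-linear map which is a map of C-bimodules, i.e. Δ(a·c) = (L_a ⊗ id)(Δ(c)) and Δ(a·c) = (id ⊗ L_c)(Δ(a)) for all a, c ∈ C, where L_x denotes multiplication by x. Let H be an associative unital R-algebra and τ : C → H an R-linear map. Define the R-linear map D : C ⊗[R] H → C ⊗[R] H as the composite D = (id_C ⊗ β) ∘ (Δ ⊗ id_H), where β : C ⊗ H → H is the linear map β(c' ⊗ h) = τ(c')·h − h·τ(c'); thus D(c ⊗ h) = Σᵢ c₍₁ᵢ₎ ⊗ (τ(c₍₂ᵢ₎)·h − h·τ(c₍₂ᵢ₎)) where Δ(c) = Σᵢ c₍₁ᵢ₎ ⊗ c₍₂ᵢ₎. Then D is a derivation of the tensor product algebra C ⊗[R] H: D(x·y) = D(x)·y + x·D(y) for all x, y ∈ C ⊗ H. -/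
/-!
Put `e = (id ⊗ τ)(Δ 1) ∈ C ⊗ H`. Left `C`-linearity gives `Δ c = (c ⊗ 1) · Δ 1`, and `C ⊗ 1` is
central in `C ⊗ H` because `C` is commutative. Hence `D x = e * x - x * e`: the twisted term is the
inner derivation defined by `e` (`twistedTermD_eq_commutator`), and the Leibniz rule is the usual
one for commutators.
-/

open TensorProduct

/-- The linear map `β : C ⊗ H → H`, `c' ⊗ h ↦ τ(c')·h − h·τ(c')`. -/
noncomputable def bracketBeta (R : Type*) {C H : Type*} [CommRing R] [CommRing C] [Algebra R C]
    [Ring H] [Algebra R H] (τ : C →ₗ[R] H) : C ⊗[R] H →ₗ[R] H :=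
  LinearMap.mul' R H ∘ₗ TensorProduct.map τ (LinearMap.id : H →ₗ[R] H)
    - LinearMap.mul' R H ∘ₗ TensorProduct.map (LinearMap.id : H →ₗ[R] H) τ
        ∘ₗ (TensorProduct.comm R C H).toLinearMap

/-- The twisted term `D = (id_C ⊗ β) ∘ (Δ ⊗ id_H) : C ⊗ H → C ⊗ H`, so that
`D (c ⊗ h) = Σᵢ c₍₁ᵢ₎ ⊗ (τ(c₍₂ᵢ₎)·h − h·τ(c₍₂ᵢ₎))`. -/
noncomputable def twistedTermD (R : Type*) {C H : Type*} [CommRing R] [CommRing C] [Algebra R C]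
    [Ring H] [Algebra R H] (Δ : C →ₗ[R] C ⊗[R] C) (τ : C →ₗ[R] H) :
    C ⊗[R] H →ₗ[R] C ⊗[R] H :=
  TensorProduct.map (LinearMap.id : C →ₗ[R] C) (bracketBeta R τ)
    ∘ₗ (TensorProduct.assoc R C C H).toLinearMap
    ∘ₗ TensorProduct.map Δ (LinearMap.id : H →ₗ[R] H)

/-- The map `id ⊗ β`, evaluated at `(a ⊗ 1) · t` and `h`, is the commutator of `(id ⊗ τ) t` with
`a ⊗ h`. With `t = Δ 1` this computes the twisted term at `a ⊗ h`. -/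
theorem map_bracketBeta_assoc {R C H : Type*} [CommRing R] [CommRing C] [Algebra R C]
    [Ring H] [Algebra R H] (τ : C →ₗ[R] H) (a : C) (h : H) (t : C ⊗[R] C) :
    TensorProduct.map (LinearMap.id : C →ₗ[R] C) (bracketBeta R τ)
        (TensorProduct.assoc R C C H
          (TensorProduct.map (LinearMap.mulLeft R a) (LinearMap.id : C →ₗ[R] C) t ⊗ₜ[R] h))
      = TensorProduct.map (LinearMap.id : C →ₗ[R] C) τ t * (a ⊗ₜ[R] h)
        - (a ⊗ₜ[R] h) * TensorProduct.map (LinearMap.id : C →ₗ[R] C) τ t := by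
  induction t with
  | zero => simp
  | tmul c d => simp [bracketBeta, TensorProduct.tmul_sub, mul_comm a c]
  | add s t hs ht =>
    simp only [map_add, TensorProduct.add_tmul, hs, ht, add_mul, mul_add]
    abel

theorem twistedTermD_eq_commutator {R C H : Type*} [CommRing R] [CommRing C] [Algebra R C]
    [Ring H] [Algebra R H] (Δ : C →ₗ[R] C ⊗[R] C)
    (hleft : ∀ a c : C,
      Δ (a * c) = TensorProduct.map (LinearMap.mulLeft R a) (LinearMap.id : C →ₗ[R] C) (Δ c))
    (τ : C →ₗ[R] H) (x : C ⊗[R] H) :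
    twistedTermD R Δ τ x
      = TensorProduct.map (LinearMap.id : C →ₗ[R] C) τ (Δ 1) * x
        - x * TensorProduct.map (LinearMap.id : C →ₗ[R] C) τ (Δ 1) := by
  induction x with
  | zero => simp
  | tmul c h =>
    have hc := hleft c 1
    rw [mul_one] at hc
    rw [← map_bracketBeta_assoc, ← hc]
    rfl
  | add x y hx hy =>
    rw [map_add, hx, hy, mul_add, add_mul]
    abel

/-- If `Δ : C → C ⊗ C` is a map of `C`-bimodules over a commutative algebra `C`, then for
any linear `τ : C → H` the twisted term `D(c ⊗ h) = Σᵢ c₍₁ᵢ₎ ⊗ (τ(c₍₂ᵢ₎)·h − h·τ(c₍₂ᵢ₎))`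
is a derivation of the tensor product algebra `C ⊗[R] H`. -/
theorem twistedTermD_derivation {R C H : Type*} [CommRing R] [CommRing C] [Algebra R C]
    [Ring H] [Algebra R H]
    (Δ : C →ₗ[R] C ⊗[R] C)
    (hleft : ∀ a c : C,
      Δ (a * c) = TensorProduct.map (LinearMap.mulLeft R a) (LinearMap.id : C →ₗ[R] C) (Δ c))
    (hright : ∀ a c : C,
      Δ (a * c) = TensorProduct.map (LinearMap.id : C →ₗ[R] C) (LinearMap.mulLeft R c) (Δ a))
    (τ : C →ₗ[R] H) :
    ∀ x y : C ⊗[R] H,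
      twistedTermD R Δ τ (x * y)
        = twistedTermD R Δ τ x * y + x * twistedTermD R Δ τ y := by
  intro x y
  simp only [twistedTermD_eq_commutator Δ hleft τ]
  noncomm_ring
end

section
/- Let R be a commutative ring, C a coassociative counital cocommutative coalgebra over R with comultiplication Δ_C, and H an R-bialgebra with comultiplication Δ_H and multiplication μ_H. Let τ : C → H be an R-linear map whose image consists of primitive elements of H. Equip C ⊗[R] H with the tensor product coalgebra structure, with comultiplication Δ = (id_C ⊗ swap ⊗ id_H) ∘ (Δ_C ⊗ Δ_H). Define the R-linear 'twisted term' T : C ⊗ H → C ⊗ H as the composite T = (id_C ⊗ μ_H) ∘ (id_C ⊗ τ ⊗ id_H) ∘ (Δ_C ⊗ id_H), so T(c ⊗ h) = Σᵢ c₍₁ᵢ₎ ⊗ τ(c₍₂ᵢ₎)·h where Δ_C(c) = Σᵢ c₍₁ᵢ₎ ⊗ c₍₂ᵢ₎. Then T is a coderivation of the tensor coalgebra structure: Δ ∘ T = (T ⊗ id + id ⊗ T) ∘ Δ. -/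
/-!
By linearity, everything is evaluated on `c ⊗ h`, and `Δ_H h` may be replaced by a pure tensor
`h₁ ⊗ h₂`. As `Δ_H` is multiplicative and `τ` takes primitive values, `Δ (T (c ⊗ h))` is then
`Σ (c₍₁₎ ⊗ τ(c₍₃₎) h₁) ⊗ (c₍₂₎ ⊗ h₂) + Σ (c₍₁₎ ⊗ h₁) ⊗ (c₍₂₎ ⊗ τ(c₍₃₎) h₂)`.
The second sum is `(id ⊗ T) Δ (c ⊗ h)` by coassociativity. Cocommutativity lets one exchange
`c₍₂₎` and `c₍₃₎` in the first sum (`iterated_comul_swap`), which turns it into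
`(T ⊗ id) Δ (c ⊗ h)`.
-/

open TensorProduct

/-- The tensor product coalgebra comultiplication on `C ⊗[R] H`:
`Δ = (id ⊗ swap ⊗ id) ∘ (Δ_C ⊗ Δ_H)`. -/
noncomputable def tensorComul (R C H : Type*) [CommRing R]
    [AddCommGroup C] [Module R C] [Coalgebra R C]
    [Ring H] [Bialgebra R H] :
    C ⊗[R] H →ₗ[R] (C ⊗[R] H) ⊗[R] (C ⊗[R] H) :=
  (TensorProduct.tensorTensorTensorComm R C C H H).toLinearMap
    ∘ₗ TensorProduct.map (Coalgebra.comul (R := R)) (Coalgebra.comul (R := R))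

/-- The twisted term `T = (id_C ⊗ μ_H) ∘ (id_C ⊗ τ ⊗ id_H) ∘ (Δ_C ⊗ id_H)`, so that
`T (c ⊗ h) = Σᵢ c₍₁ᵢ₎ ⊗ τ(c₍₂ᵢ₎)·h`. -/
noncomputable def twistedTermT (R C H : Type*) [CommRing R]
    [AddCommGroup C] [Module R C] [Coalgebra R C]
    [Ring H] [Bialgebra R H] (τ : C →ₗ[R] H) :
    C ⊗[R] H →ₗ[R] C ⊗[R] H :=
  TensorProduct.map (LinearMap.id : C →ₗ[R] C) (LinearMap.mul' R H)
    ∘ₗ (TensorProduct.assoc R C H H).toLinearMap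
    ∘ₗ TensorProduct.map (TensorProduct.map (LinearMap.id : C →ₗ[R] C) τ)
        (LinearMap.id : H →ₗ[R] H)
    ∘ₗ TensorProduct.map (Coalgebra.comul (R := R)) (LinearMap.id : H →ₗ[R] H)

open Coalgebra

/-- The map `a ⊗ b ↦ a ⊗ τ(b) h`, so that `T (c ⊗ h) = twistBy τ h (Δ c)`. -/
noncomputable def twistBy {R C H : Type*} [CommRing R] [AddCommGroup C] [Module R C]
    [Ring H] [Algebra R H] (τ : C →ₗ[R] H) (h : H) : C ⊗[R] C →ₗ[R] C ⊗[R] H :=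
  TensorProduct.map LinearMap.id (LinearMap.mulRight R h ∘ₗ τ)

theorem twistedTermT_tmul {R C H : Type*} [CommRing R]
    [AddCommGroup C] [Module R C] [Coalgebra R C] [Ring H] [Bialgebra R H]
    (τ : C →ₗ[R] H) (c : C) (h : H) :
    twistedTermT R C H τ (c ⊗ₜ h) = twistBy τ h (comul (R := R) c) := by
  simp only [twistedTermT, twistBy, LinearMap.comp_apply, TensorProduct.map_tmul]
  induction comul (R := R) c with
  | zero => simp
  | add x y hx hy => simp only [map_add, TensorProduct.add_tmul, hx, hy]
  | tmul a b => simp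

/-- `Σ c₍₁₎ ⊗ c₍₂₎ ⊗ c₍₃₎ = Σ c₍₁₎ ⊗ c₍₃₎ ⊗ c₍₂₎` in a cocommutative coalgebra, with the two
sides bracketed to the left. -/
theorem iterated_comul_swap {R C : Type*} [CommRing R]
    [AddCommGroup C] [Module R C] [Coalgebra R C]
    (hcocomm : (TensorProduct.comm R C C).toLinearMap ∘ₗ (Coalgebra.comul (R := R))
      = (Coalgebra.comul : C →ₗ[R] C ⊗[R] C)) (c : C) :
    (TensorProduct.assoc R C C C).symm ((TensorProduct.comm R C C).toLinearMap.lTensor C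
      (TensorProduct.assoc R C C C ((comul (R := R)).rTensor C (comul (R := R) c))))
      = (comul (R := R)).rTensor C (comul (R := R) c) := by
  rw [Coalgebra.coassoc_apply, ← LinearMap.lTensor_comp_apply, hcocomm,
    Coalgebra.coassoc_symm_apply]

/-- The two sums making up `Δ ∘ T`, for `Δ_H h` replaced by a pure tensor `h₁ ⊗ h₂` and the
iterated coproduct of `c` replaced by an arbitrary `z`. -/
theorem expand_primitive {R C H : Type*} [CommRing R]
    [AddCommGroup C] [Module R C] [Ring H] [Bialgebra R H] (τ : C →ₗ[R] H)
    (hτ : ∀ c : C, Coalgebra.comul (R := R) (τ c) = τ c ⊗ₜ[R] 1 + 1 ⊗ₜ[R] τ c)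
    (h₁ h₂ : H) (z : (C ⊗[R] C) ⊗[R] C) :
    TensorProduct.tensorTensorTensorComm R C C H H (TensorProduct.map LinearMap.id
        (LinearMap.mulRight R (h₁ ⊗ₜ[R] h₂) ∘ₗ comul (R := R) ∘ₗ τ) z)
      = TensorProduct.map (twistBy τ h₁) ((TensorProduct.mk R C H).flip h₂)
          ((TensorProduct.assoc R C C C).symm ((TensorProduct.comm R C C).toLinearMap.lTensor C
            (TensorProduct.assoc R C C C z)))
        + TensorProduct.map ((TensorProduct.mk R C H).flip h₁) (twistBy τ h₂)
          (TensorProduct.assoc R C C C z) := by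
  induction z with
  | zero => simp
  | add x y hx hy => simp only [map_add, hx, hy]; abel
  | tmul w d =>
    induction w with
    | zero => simp
    | add x y hx hy => simp only [map_add, TensorProduct.add_tmul, hx, hy]; abel
    | tmul a b => simp [twistBy, hτ, add_mul, TensorProduct.tmul_add]

/-- If `C` is a cocommutative coalgebra, `H` a bialgebra, and `τ : C → H` a linear map
whose image consists of primitive elements, then the twisted term
`T (c ⊗ h) = Σᵢ c₍₁ᵢ₎ ⊗ τ(c₍₂ᵢ₎)·h` is a coderivation of the tensor product coalgebra
structure on `C ⊗[R] H`: `Δ ∘ T = (T ⊗ id + id ⊗ T) ∘ Δ`. -/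
theorem twistedTermT_coderivation {R C H : Type*} [CommRing R]
    [AddCommGroup C] [Module R C] [Coalgebra R C]
    (hcocomm : (TensorProduct.comm R C C).toLinearMap ∘ₗ (Coalgebra.comul (R := R))
      = (Coalgebra.comul : C →ₗ[R] C ⊗[R] C))
    [Ring H] [Bialgebra R H]
    (τ : C →ₗ[R] H)
    (hτ : ∀ c : C, Coalgebra.comul (R := R) (τ c) = τ c ⊗ₜ[R] 1 + 1 ⊗ₜ[R] τ c) :
    tensorComul R C H ∘ₗ twistedTermT R C H τ
      = TensorProduct.map (twistedTermT R C H τ) (LinearMap.id : C ⊗[R] H →ₗ[R] C ⊗[R] H)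
          ∘ₗ tensorComul R C H
        + TensorProduct.map (LinearMap.id : C ⊗[R] H →ₗ[R] C ⊗[R] H) (twistedTermT R C H τ)
          ∘ₗ tensorComul R C H := by
  ext c h
  simp only [TensorProduct.AlgebraTensorModule.curry_apply, TensorProduct.curry_apply,
    LinearMap.restrictScalars_self, LinearMap.comp_apply, LinearMap.add_apply]
  -- `Δ (T (c ⊗ h))` depends on `h` only through `Δ_H h`.
  have hL : tensorComul R C H (twistedTermT R C H τ (c ⊗ₜ h))
      = TensorProduct.tensorTensorTensorComm R C C H H (TensorProduct.map LinearMap.id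
        (LinearMap.mulRight R (comul (R := R) h) ∘ₗ comul (R := R) ∘ₗ τ)
          ((comul (R := R)).rTensor C (comul (R := R) c))) := by
    rw [twistedTermT_tmul]
    induction comul (R := R) c with
    | zero => simp
    | add x y hx hy => simp only [map_add, hx, hy]
    | tmul a b => simp [twistBy, tensorComul]
  have hR : tensorComul R C H (c ⊗ₜ h) = TensorProduct.tensorTensorTensorComm R C C H H
      (comul (R := R) c ⊗ₜ comul (R := R) h) := rfl
  rw [hL, hR]
  induction comul (R := R) h with
  | zero => simp
  | add x y hx hy =>
    have hadd : LinearMap.mulRight R (x + y) = LinearMap.mulRight R x + LinearMap.mulRight R y := by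
      ext z; simp [mul_add]
    simp only [hadd, LinearMap.add_comp, TensorProduct.map_add_right, LinearMap.add_apply,
      TensorProduct.tmul_add, map_add, hx, hy]
    abel
  | tmul h₁ h₂ =>
    rw [expand_primitive τ hτ, iterated_comul_swap hcocomm, Coalgebra.coassoc_apply]
    congr 1
    · induction comul (R := R) c with
      | zero => simp
      | add x y hx hy => simp only [map_add, TensorProduct.add_tmul, hx, hy]
      | tmul a b => simp [twistedTermT_tmul]
    · induction comul (R := R) c with
      | zero => simp
      | add x y hx hy => simp only [map_add, TensorProduct.add_tmul, hx, hy]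
      | tmul a b => simp [twistedTermT_tmul]
end

section
/- Let R be a commutative ℚ-algebra, C a coassociative counital cocommutative coalgebra over R with comultiplication Δ, and L a Lie algebra over R. On the R-module Hom_R(C, L) of R-linear maps, define the convolution bracket ⁅f, g⁆ as the composite (Lie bracket of L) ∘ (f ⊗ g) ∘ Δ, so ⁅f, g⁆(c) = Σᵢ ⁅f(c₍₁ᵢ₎), g(c₍₂ᵢ₎)⁆ where Δ(c) = Σᵢ c₍₁ᵢ₎ ⊗ c₍₂ᵢ₎. Then this bracket makes Hom_R(C, L) a Lie algebra over R: it is R-bilinear, satisfies ⁅f, f⁆ = 0 for all f, and satisfies the Leibniz/Jacobi identity ⁅f, ⁅g, h⁆⁆ = ⁅⁅f, g⁆, h⁆ + ⁅g, ⁅f, h⁆⁆ for all f, g, h. -/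
/-!
Bilinearity is inherited from the Lie bracket. Cocommutativity gives antisymmetry,
`convBracket f g = -convBracket g f`, and since `2` is invertible in `R` the bracket is
alternating. For the Leibniz identity, both sides at `c` are linear functionals of
`u = (Δ ⊗ id) (Δ c)`: coassociativity brings the iterated brackets nested on the right into this
form (`convBracket_nested_right`), and cocommutativity says `u` is fixed by exchanging its first
two factors. After that exchange in the last term, the identity is the Leibniz identity of `L` on
pure tensors.
-/

open TensorProduct

/-- The convolution bracket `⁅f, g⁆ = [·,·] ∘ (f ⊗ g) ∘ Δ` on `Hom_R(C, L)`, so that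
`⁅f, g⁆ (c) = Σᵢ ⁅f c₍₁ᵢ₎, g c₍₂ᵢ₎⁆`. -/
noncomputable def convBracket (R C L : Type*) [CommRing R] [Algebra ℚ R]
    [AddCommGroup C] [Module R C] [Coalgebra R C]
    [LieRing L] [LieAlgebra R L] (f g : C →ₗ[R] L) : C →ₗ[R] L :=
  TensorProduct.lift
    (LinearMap.mk₂ R (fun x y : L => ⁅x, y⁆)
      (fun m₁ m₂ n => add_lie m₁ m₂ n)
      (fun r m n => smul_lie r m n)
      (fun m n₁ n₂ => lie_add m n₁ n₂)
      (fun r m n => lie_smul r m n))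
    ∘ₗ TensorProduct.map f g ∘ₗ (Coalgebra.comul (R := R))

/-- The Lie bracket of `L` as a linear map `L ⊗ L → L`, in the form used by `convBracket`. -/
noncomputable def lieTensor (R L : Type*) [CommRing R] [LieRing L] [LieAlgebra R L] :
    L ⊗[R] L →ₗ[R] L :=
  TensorProduct.lift
    (LinearMap.mk₂ R (fun x y : L => ⁅x, y⁆)
      (fun m₁ m₂ n => add_lie m₁ m₂ n)
      (fun r m n => smul_lie r m n)
      (fun m n₁ n₂ => lie_add m n₁ n₂)
      (fun r m n => lie_smul r m n))

lemma lieTensor_tmul {R L : Type*} [CommRing R] [LieRing L] [LieAlgebra R L] (x y : L) :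
    lieTensor R L (x ⊗ₜ[R] y) = ⁅x, y⁆ := rfl

section ConvBracket

variable {R C L : Type*} [CommRing R] [Algebra ℚ R]
    [AddCommGroup C] [Module R C] [Coalgebra R C] [LieRing L] [LieAlgebra R L]

lemma convBracket_apply (f g : C →ₗ[R] L) (c : C) :
    convBracket R C L f g c = lieTensor R L (TensorProduct.map f g (Coalgebra.comul c)) := rfl

lemma convBracket_skew
    (hcocomm : (TensorProduct.comm R C C).toLinearMap ∘ₗ (Coalgebra.comul (R := R))
      = (Coalgebra.comul : C →ₗ[R] C ⊗[R] C)) (f g : C →ₗ[R] L) :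
    convBracket R C L f g = -convBracket R C L g f := by
  have key : lieTensor R L ∘ₗ TensorProduct.map f g ∘ₗ (TensorProduct.comm R C C).toLinearMap
      = -(lieTensor R L ∘ₗ TensorProduct.map g f) := by
    refine TensorProduct.ext' fun x y => ?_
    simp [lieTensor_tmul]
  ext c
  have h := LinearMap.congr_fun key (Coalgebra.comul c)
  have hc := LinearMap.congr_fun hcocomm c
  simp only [LinearMap.comp_apply, LinearMap.neg_apply] at h hc
  rw [hc] at h
  exact h

/-- The iterated bracket `⁅f, ⁅g, h⁆⁆` as a functional of `(Δ ⊗ id) (Δ c)`; the passage from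
`(id ⊗ Δ) (Δ c)` is coassociativity. -/
lemma convBracket_nested_right (f g h : C →ₗ[R] L) (c : C) :
    convBracket R C L f (convBracket R C L g h) c
      = (lieTensor R L ∘ₗ TensorProduct.map f (lieTensor R L ∘ₗ TensorProduct.map g h) ∘ₗ
          (TensorProduct.assoc R C C C).toLinearMap)
        (Coalgebra.comul.rTensor C (Coalgebra.comul (R := R) c)) := by
  have key : TensorProduct.map f (convBracket R C L g h)
      = TensorProduct.map f (lieTensor R L ∘ₗ TensorProduct.map g h) ∘ₗ
          (Coalgebra.comul (R := R) (A := C)).lTensor C :=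
    TensorProduct.ext' fun x y => rfl
  rw [convBracket_apply, key]
  simp only [LinearMap.comp_apply, LinearEquiv.coe_coe, Coalgebra.coassoc_apply]

lemma convBracket_nested_left (f g h : C →ₗ[R] L) (c : C) :
    convBracket R C L (convBracket R C L f g) h c
      = (lieTensor R L ∘ₗ TensorProduct.map (lieTensor R L ∘ₗ TensorProduct.map f g) h)
        (Coalgebra.comul.rTensor C (Coalgebra.comul (R := R) c)) := by
  have key : TensorProduct.map (convBracket R C L f g) h
      = TensorProduct.map (lieTensor R L ∘ₗ TensorProduct.map f g) h ∘ₗ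
          (Coalgebra.comul (R := R) (A := C)).rTensor C :=
    TensorProduct.ext' fun x y => rfl
  rw [convBracket_apply, key]
  rfl

lemma convBracket_leibniz
    (hcocomm : (TensorProduct.comm R C C).toLinearMap ∘ₗ (Coalgebra.comul (R := R))
      = (Coalgebra.comul : C →ₗ[R] C ⊗[R] C)) (f g h : C →ₗ[R] L) :
    convBracket R C L f (convBracket R C L g h)
      = convBracket R C L (convBracket R C L f g) h
        + convBracket R C L g (convBracket R C L f h) := by
  -- The Leibniz identity of `L` on pure tensors, the last term taken after exchanging
  -- the first two tensor factors.
  have key : lieTensor R L ∘ₗ TensorProduct.map f (lieTensor R L ∘ₗ TensorProduct.map g h) ∘ₗ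
          (TensorProduct.assoc R C C C).toLinearMap
      = lieTensor R L ∘ₗ TensorProduct.map (lieTensor R L ∘ₗ TensorProduct.map f g) h
        + (lieTensor R L ∘ₗ TensorProduct.map g (lieTensor R L ∘ₗ TensorProduct.map f h) ∘ₗ
          (TensorProduct.assoc R C C C).toLinearMap) ∘ₗ
          (TensorProduct.comm R C C).toLinearMap.rTensor C := by
    refine TensorProduct.ext_threefold fun x y z => ?_
    simp [lieTensor_tmul]
  ext c
  have hu : (TensorProduct.comm R C C).toLinearMap.rTensor C
      (Coalgebra.comul.rTensor C (Coalgebra.comul (R := R) c))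
      = Coalgebra.comul.rTensor C (Coalgebra.comul (R := R) c) := by
    rw [← LinearMap.comp_apply, ← LinearMap.rTensor_comp, hcocomm]
  rw [LinearMap.add_apply, convBracket_nested_right, convBracket_nested_left,
    convBracket_nested_right, key, LinearMap.add_apply,
    LinearMap.comp_apply _ (LinearMap.rTensor _ _), hu]

end ConvBracket

/-- For a cocommutative coalgebra `C` over a commutative `ℚ`-algebra `R` and a Lie
algebra `L` over `R`, the convolution bracket makes `Hom_R(C, L)` a Lie algebra over `R`:
it is `R`-bilinear, alternating, and satisfies the Leibniz/Jacobi identity. -/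
theorem convBracket_lieAlgebra {R C L : Type*} [CommRing R] [Algebra ℚ R]
    [AddCommGroup C] [Module R C] [Coalgebra R C]
    (hcocomm : (TensorProduct.comm R C C).toLinearMap ∘ₗ (Coalgebra.comul (R := R))
      = (Coalgebra.comul : C →ₗ[R] C ⊗[R] C))
    [LieRing L] [LieAlgebra R L] :
    (∀ f₁ f₂ g : C →ₗ[R] L,
        convBracket R C L (f₁ + f₂) g = convBracket R C L f₁ g + convBracket R C L f₂ g)
    ∧ (∀ (r : R) (f g : C →ₗ[R] L),
        convBracket R C L (r • f) g = r • convBracket R C L f g)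
    ∧ (∀ f g₁ g₂ : C →ₗ[R] L,
        convBracket R C L f (g₁ + g₂) = convBracket R C L f g₁ + convBracket R C L f g₂)
    ∧ (∀ (r : R) (f g : C →ₗ[R] L),
        convBracket R C L f (r • g) = r • convBracket R C L f g)
    ∧ (∀ f : C →ₗ[R] L, convBracket R C L f f = 0)
    ∧ (∀ f g h : C →ₗ[R] L,
        convBracket R C L f (convBracket R C L g h)
          = convBracket R C L (convBracket R C L f g) h
            + convBracket R C L g (convBracket R C L f h)) := by
  refine ⟨fun f₁ f₂ g => ?_, fun r f g => ?_, fun f g₁ g₂ => ?_, fun r f g => ?_, fun f => ?_,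
    convBracket_leibniz hcocomm⟩
  · ext c
    simp [convBracket_apply, TensorProduct.map_add_left]
  · ext c
    simp [convBracket_apply, TensorProduct.map_smul_left]
  · ext c
    simp [convBracket_apply, TensorProduct.map_add_right]
  · ext c
    simp [convBracket_apply, TensorProduct.map_smul_right]
  · -- `⁅f, f⁆ = -⁅f, f⁆`, and `2` is invertible in the `ℚ`-algebra `R`.
    have h := convBracket_skew hcocomm f f
    have h2 : (2 : R) • convBracket R C L f f = 0 := by
      rw [two_smul]
      exact eq_neg_iff_add_eq_zero.mp h
    have hunit : IsUnit (2 : R) := by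
      rw [← map_ofNat (algebraMap ℚ R) 2]
      exact (IsUnit.mk0 (2 : ℚ) two_ne_zero).map (algebraMap ℚ R)
    exact hunit.smul_eq_zero.mp h2
end
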